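/- Let (A,B,C) be a triality triple and set x = A(1), y = B(1). Then C(1)·x = y, and the triple τ(A,B,C) = (κ∘B∘κ, κ∘C∘κ, A) satisfies (κ∘B∘κ)(1) = ȳ and (κ∘C∘κ)(1) = x·ȳ. Hence on S⁷ × S⁷ the triality automorphism induces the map τ(x,y) = (ȳ, x·ȳ). -/

import Mathlib

noncomputable section

/-- The octonions as the Cayley–Dickson double of the quaternions. -/
abbrev Oct : Type := Quaternion ℝ × Quaternion ℝ

namespace Oct

/-- Cayley–Dickson multiplication: (a,b)·(c,d) = (ac − d̄b, da + bc̄). -/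
def mul (x y : Oct) : Oct :=
  (x.1 * y.1 - star y.2 * x.2, y.2 * x.1 + x.2 * star y.1)

/-- The unit 1 = (1,0). -/
def one : Oct := (1, 0)

/-- Octonionic conjugation κ(a,b) = (ā, −b). -/
def conj (x : Oct) : Oct := (star x.1, -x.2)

/-- The squared Euclidean norm ‖(a,b)‖² = ‖a‖² + ‖b‖². -/
def normSq (x : Oct) : ℝ := ‖x.1‖ ^ 2 + ‖x.2‖ ^ 2

/-- Left multiplication L(s) : y ↦ s·y. -/
def L (s : Oct) : Oct → Oct := fun y => mul s y

/-- A linear automorphism of 𝕆 is an isometry if it preserves the Euclidean norm. -/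
def IsIsometry (A : Oct ≃ₗ[ℝ] Oct) : Prop := ∀ x, normSq (A x) = normSq x

/-- A triality triple: ℝ-linear isometric bijections with B(x·y) = (Cx)·(Ay). -/
def IsTriality (A B C : Oct ≃ₗ[ℝ] Oct) : Prop :=
  IsIsometry A ∧ IsIsometry B ∧ IsIsometry C ∧
    ∀ x y : Oct, B (mul x y) = mul (C x) (A y)

/-- Octonionic conjugation κ as an ℝ-linear equivalence. -/
def kappa : Oct ≃ₗ[ℝ] Oct where
  toFun := conj
  invFun := conj
  left_inv := fun x => by simp [conj]
  right_inv := fun x => by simp [conj]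
  map_add' := fun x y => by simp [conj, Prod.ext_iff, star_add, neg_add, add_comm]
  map_smul' := fun r x => by simp [conj, Prod.ext_iff]

/-- D ↦ κ∘D∘κ. -/
def conjOp (D : Oct ≃ₗ[ℝ] Oct) : Oct ≃ₗ[ℝ] Oct := kappa.trans (D.trans kappa)

/-- Triples of ℝ-linear bijections of 𝕆. -/
abbrev Triple := (Oct ≃ₗ[ℝ] Oct) × (Oct ≃ₗ[ℝ] Oct) × (Oct ≃ₗ[ℝ] Oct)

/-- The triality map τ(A,B,C) = (κBκ, κCκ, A). -/
def tauMap (T : Triple) : Triple := (conjOp T.2.1, conjOp T.2.2, T.1)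

/-- The outer involution σ(A,B,C) = (B, A, κCκ). -/
def sigmaMap (T : Triple) : Triple := (T.2.1, T.1, conjOp T.2.2)

/-- The induced map on S⁷ × S⁷: t(x,y) = (ȳ, x·ȳ). -/
def tS (p : Oct × Oct) : Oct × Oct := (conj p.2, mul p.1 (conj p.2))

/-- The swap s(x,y) = (y,x). -/
def swap (p : Oct × Oct) : Oct × Oct := (p.2, p.1)

end Oct

open Oct

namespace Oct

protected theorem one_mul (x : Oct) : mul one x = x := by
  simp [mul, one]

theorem conj_one : conj one = one := by
  simp [conj, one]

theorem normSq_one : normSq one = 1 := by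
  simp [normSq, one]

theorem conj_mul (x y : Oct) : conj (mul x y) = mul (conj y) (conj x) := by
  ext1
  · simp [mul, conj]
  · simp [mul, conj, add_comm]

theorem normSq_eq_quaternion_normSq_add (x : Oct) :
    normSq x = Quaternion.normSq x.1 + Quaternion.normSq x.2 := by
  simp only [normSq, Quaternion.normSq_eq_norm_mul_self, sq]

/- Expanding leaves the terms `± a d̄ b` in the first component and `± b c̄ a` in the second; they
cancel, and what survives contains `x` only through the central quaternions `a ā` and `b b̄`. -/
theorem mul_conj_mul_cancel_left (x y : Oct) : mul x (mul (conj x) y) = normSq x • y := by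
  obtain ⟨a, b⟩ := x
  obtain ⟨c, d⟩ := y
  rw [normSq_eq_quaternion_normSq_add]
  ext1
  · calc a * (star a * c - star d * -b) - star (d * star a + -b * star c) * b
        = (a * star a) * c + c * (star b * b) := by
          simp only [star_add, star_mul, star_neg, star_star]
          noncomm_ring
      _ = (Quaternion.normSq a + Quaternion.normSq b) • c := by
          rw [Quaternion.self_mul_star, Quaternion.star_mul_self, Quaternion.coe_mul_eq_smul,
            Quaternion.mul_coe_eq_smul, add_smul]
  · calc (d * star a + -b * star c) * a + b * star (star a * c - star d * -b)
        = d * (star a * a) + (b * star b) * d := by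
          simp only [star_sub, star_mul, star_neg, star_star]
          noncomm_ring
      _ = (Quaternion.normSq a + Quaternion.normSq b) • d := by
          rw [Quaternion.self_mul_star, Quaternion.star_mul_self, Quaternion.coe_mul_eq_smul,
            Quaternion.mul_coe_eq_smul, add_smul]

theorem mul_conj_mul_self (x z : Oct) : mul x (conj (mul z x)) = normSq x • conj z := by
  rw [conj_mul, mul_conj_mul_cancel_left]

end Oct

theorem tau_on_sphere_general {A B C : Oct → Oct} (hA : normSq (A one) = 1)
    (hABC : ∀ x y, B (mul x y) = mul (C x) (A y)) :
    mul (C one) (A one) = B one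
    ∧ conj (B (conj one)) = conj (B one)
    ∧ conj (C (conj one)) = mul (A one) (conj (B one)) := by
  have hB : mul (C one) (A one) = B one := by rw [← hABC, Oct.one_mul]
  refine ⟨hB, by rw [conj_one], ?_⟩
  calc conj (C (conj one)) = normSq (A one) • conj (C one) := by rw [conj_one, hA, one_smul]
    _ = mul (A one) (conj (mul (C one) (A one))) := (mul_conj_mul_self _ _).symm
    _ = mul (A one) (conj (B one)) := by rw [hB]

/-- for a triality triple, C(1)·A(1) = B(1) and τ(A,B,C) satisfies
(κBκ)(1) = B(1)‾ and (κCκ)(1) = A(1)·B(1)‾, i.e. τ induces (x,y) ↦ (ȳ, x·ȳ). -/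
theorem tau_on_sphere (A B C : Oct ≃ₗ[ℝ] Oct) (h : IsTriality A B C) :
    mul (C one) (A one) = B one
    ∧ (conjOp B) one = conj (B one)
    ∧ (conjOp C) one = mul (A one) (conj (B one)) :=
  tau_on_sphere_general ((h.1 one).trans normSq_one) h.2.2.2
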